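/- Suppose (𝕏,d,ν) satisfies Assumption (A). Let Λ ⊆ 𝕏 be bounded and measurable, R ≥ 0, let φ be a symmetric repulsive potential with range at most R, and let y ∈ 𝕏. Then for every z ∈ [0, 1/B_R]: Σ_{k≥1} (z^k/k!) ∫_{Λ^k} (1 − e^{−φ(y,x)}) · e^{−H(x | y_{≺x})} dν^k(x) ≤ 1. -/

import Mathlib

/-!
Let `f_k(x) = exp(-∑_{∅ ≠ S ⊆ [k]} φ(y, x_S))` (`fullFactor`). By Assumption (A) almost every tuple
`x` avoids the base point, so every proper subtuple of `x` strictly precedes `x` and the partially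
pinned Hamiltonian contains `φ(y, x_S)` for all proper nonempty `S`. Dropping the other, nonnegative
terms, the integrand is at most
`(1 - e^{-φ(y,x)}) ∏_{∅ ≠ S ⊊ [k]} e^{-φ(y,x_S)} ≤ f_{k-1}(x₂, …, x_k) - f_k(x)` (`integrand_le`).

By the range condition the integrand is supported on tuples in `Λ ∩ closedBall y R`, a set of
measure `b ≤ B_R`. With `F_k` the integral of `f_k` over tuples in this set, the `k`-th term of the
series is at most `z^k/k! (b F_{k-1} - F_k)` (`integral_le`). Since `z b ≤ 1`, this is at most
`a_{k-1} - a_k` for `a_k = z^k/k! F_k ≥ 0`, and the partial sums telescope to at most `a_0 = 1`.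
-/

open MeasureTheory
open scoped ENNReal NNReal BigOperators Classical

noncomputable section

namespace GibbsPP

variable {𝕏 : Type*}

/-- A potential: for each arity `k`, a symmetric function on `k`-tuples with values in
`ℝ ∪ {∞} ⊆ EReal` (the value `⊥ = -∞` is excluded by `IsPotential`). -/
abbrev Potential (𝕏 : Type*) : Type _ := ∀ k : ℕ, (Fin k → 𝕏) → EReal

/-- The subtuple `x_S` of a tuple `x` indexed by the finite set `S`. -/
def subtuple {k : ℕ} (x : Fin k → 𝕏) (S : Finset (Fin k)) : Fin S.card → 𝕏 :=
  fun i => x (S.orderIsoOfFin rfl i).1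

/-- `φ` is an honest potential: it never takes the value `-∞` (so its values lie in
`ℝ ∪ {∞}`) and each `φ_k` is measurable. -/
def IsPotential [MeasurableSpace 𝕏] (φ : Potential 𝕏) : Prop :=
  (∀ (k : ℕ) (x : Fin k → 𝕏), φ k x ≠ ⊥) ∧ ∀ k : ℕ, Measurable (φ k)

/-- Symmetry of a potential under permutations of the coordinates. -/
def IsSymmetric (φ : Potential 𝕏) : Prop :=
  ∀ (k : ℕ) (π : Equiv.Perm (Fin k)) (x : Fin k → 𝕏), φ k (x ∘ π) = φ k x

/-- A potential is repulsive if all its values are nonnegative. -/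
def Repulsive (φ : Potential 𝕏) : Prop := ∀ (k : ℕ) (x : Fin k → 𝕏), 0 ≤ φ k x

/-- `φ` has range at most `R`: `φ_k` vanishes on tuples of diameter greater than `R`. -/
def HasRange [PseudoMetricSpace 𝕏] (φ : Potential 𝕏) (R : ℝ) : Prop :=
  ∀ (k : ℕ) (x : Fin k → 𝕏), (∃ i j, R < dist (x i) (x j)) → φ k x = 0

/-- The Hamiltonian `H(x) = ∑_{∅ ≠ S ⊆ [k]} φ(x_S)`. -/
def hamiltonian (φ : Potential 𝕏) {k : ℕ} (x : Fin k → 𝕏) : EReal :=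
  ∑ S ∈ Finset.univ.powerset.erase (∅ : Finset (Fin k)), φ S.card (subtuple x S)

/-- `expNeg H = e^{-H}`, with `e^{-∞} = 0`. -/
def expNeg (H : EReal) : ℝ := if H = ⊤ then 0 else Real.exp (-H.toReal)

/-- The pinned potential `φ(· | x)`, given by `φ(y | x) = ∑_{S ⊆ [k]} φ(y, x_S)`. -/
def pin (φ : Potential 𝕏) {k : ℕ} (x : Fin k → 𝕏) : Potential 𝕏 :=
  fun m y => ∑ S ∈ (Finset.univ : Finset (Fin k)).powerset,
    φ (m + S.card) (Fin.append y (subtuple x S))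

/-- The ordering function `D(x₁, …, x_k) = ∑_j d(z, x_j)` (for a fixed base point `z`). -/
def D [PseudoMetricSpace 𝕏] (z : 𝕏) {k : ℕ} (x : Fin k → 𝕏) : ℝ := ∑ j, dist z (x j)

/-- The partially pinned potential `φ(· | y_{≺ t})`: the pinning at `y` is imposed exactly on
tuples `w` with `D(w) < t`, where `t ∈ [0, ∞]`. -/
def partialPin [PseudoMetricSpace 𝕏] (z : 𝕏) (φ : Potential 𝕏) (y : 𝕏) (t : ℝ≥0∞) :
    Potential 𝕏 :=
  fun m w =>
    if ENNReal.ofReal (D z w) < t then pin φ (fun _ : Fin 1 => y) m w else φ m w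

/-- The potential obtained from `φ` by replacing the one-body term by `∞` on `Δ`. -/
def restrictOne (φ : Potential 𝕏) (Δ : Set 𝕏) : Potential 𝕏 :=
  fun m x => if m = 1 ∧ ∀ i, x i ∈ Δ then ⊤ else φ m x

/-- The first `j` entries of a `k`-tuple (`j ≤ k`). -/
def firstN {k : ℕ} (x : Fin k → 𝕏) {j : ℕ} (h : j ≤ k) : Fin j → 𝕏 :=
  fun i => x (Fin.castLE h i)

section Meas
variable [MeasurableSpace 𝕏]

/-- Assumption (A): for every `x`, the pushforward of `ν` under `y ↦ d(x,y)` is absolutely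
continuous with respect to Lebesgue measure on `ℝ`. -/
def AssumptionA [PseudoMetricSpace 𝕏] (ν : Measure 𝕏) : Prop :=
  ∀ x : 𝕏, ν.map (fun y => dist x y) ≪ (volume : Measure ℝ)

/-- `B_R = sup_x ν(closedBall x R)`. -/
def ballVolSup [PseudoMetricSpace 𝕏] (ν : Measure 𝕏) (R : ℝ) : ℝ≥0∞ :=
  ⨆ x : 𝕏, ν (Metric.closedBall x R)

/-- The `k`-fold product measure `ν^k` on `𝕏^k`. -/
def piMeasure (ν : Measure 𝕏) [SigmaFinite ν] (k : ℕ) : Measure (Fin k → 𝕏) :=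
  Measure.pi fun _ => ν

/-- `Λ^k ⊆ 𝕏^k`. -/
def tupleSet (Λ : Set 𝕏) (k : ℕ) : Set (Fin k → 𝕏) := Set.univ.pi fun _ => Λ

/-- The grand-canonical partition function
`Z_{Λ,φ}(λ) = ∑_{k ≥ 0} (λ^k / k!) ∫_{Λ^k} e^{-H(x)} dν^k(x)`. -/
def partitionFunction (ν : Measure 𝕏) [SigmaFinite ν] (Λ : Set 𝕏) (φ : Potential 𝕏)
    (lam : ℂ) : ℂ :=
  ∑' k : ℕ, (lam ^ k / (Nat.factorial k : ℂ)) *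
    ∫ x in tupleSet Λ k, (expNeg (hamiltonian φ x) : ℂ) ∂(piMeasure ν k)

/-- The modified `k`-point density `κ(x) = λ^k Z_{Λ,φ}(λ | x) / Z_{Λ,φ}(λ)`. -/
def density (ν : Measure 𝕏) [SigmaFinite ν] (Λ : Set 𝕏) (φ : Potential 𝕏) (lam : ℂ)
    {k : ℕ} (x : Fin k → 𝕏) : ℂ :=
  lam ^ k * partitionFunction ν Λ (pin φ x) lam / partitionFunction ν Λ φ lam

/-- `Φ` is `δ`-zero-free on `Λ` at activity `lam`. -/
def ZeroFree (ν : Measure 𝕏) [SigmaFinite ν] (Λ : Set 𝕏) (lam : ℂ) (δ : ℝ)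
    (Φ : Set (Potential 𝕏)) : Prop :=
  ∀ φ ∈ Φ, δ ≤ ‖partitionFunction ν Λ φ lam‖

/-- `Φ` is closed under modification (with respect to the ordering based at `z`). -/
def ClosedUnderModification [PseudoMetricSpace 𝕏] (z : 𝕏) (Φ : Set (Potential 𝕏)) : Prop :=
  (∀ φ ∈ Φ, ∀ (y : 𝕏) (t : ℝ≥0∞), partialPin z φ y t ∈ Φ) ∧
  (∀ φ ∈ Φ, ∀ Δ : Set 𝕏, MeasurableSet Δ → restrictOne φ Δ ∈ Φ)

end Meas
/-! ### The Boltzmann factor `expNeg` -/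

lemma expNeg_nonneg (a : EReal) : 0 ≤ expNeg a := by
  unfold expNeg; split_ifs
  · exact le_rfl
  · exact (Real.exp_pos _).le

lemma expNeg_zero : expNeg 0 = 1 := by simp [expNeg]

lemma expNeg_anti {a b : EReal} (ha : 0 ≤ a) (hab : a ≤ b) : expNeg b ≤ expNeg a := by
  by_cases hb : b = ⊤
  · rw [expNeg, if_pos hb]; exact expNeg_nonneg a
  · have ha' : a ≠ ⊤ := fun h => hb (top_le_iff.1 (h ▸ hab))
    rw [expNeg, expNeg, if_neg hb, if_neg ha']
    refine Real.exp_le_exp.2 (neg_le_neg ?_)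
    exact EReal.toReal_le_toReal hab (fun h => by simp [h] at ha) hb

lemma expNeg_le_one {a : EReal} (ha : 0 ≤ a) : expNeg a ≤ 1 := by
  simpa [expNeg_zero] using expNeg_anti le_rfl ha

lemma expNeg_add {a b : EReal} (ha : 0 ≤ a) (hb : 0 ≤ b) :
    expNeg (a + b) = expNeg a * expNeg b := by
  have ha' : a ≠ ⊥ := fun h => by simp [h] at ha
  have hb' : b ≠ ⊥ := fun h => by simp [h] at hb
  by_cases h1 : a = ⊤
  · subst h1; simp [expNeg, EReal.top_add_of_ne_bot hb']
  by_cases h2 : b = ⊤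
  · subst h2; simp [expNeg, EReal.add_top_of_ne_bot ha']
  lift a to ℝ using ⟨h1, ha'⟩
  lift b to ℝ using ⟨h2, hb'⟩
  rw [← EReal.coe_add]
  simp only [expNeg, EReal.coe_ne_top, if_false, EReal.toReal_coe]
  rw [← Real.exp_add]; ring_nf

lemma expNeg_sum {ι : Type*} (s : Finset ι) (f : ι → EReal) (hf : ∀ i, 0 ≤ f i) :
    expNeg (∑ i ∈ s, f i) = ∏ i ∈ s, expNeg (f i) := by
  induction s using Finset.induction_on with
  | empty => simp [expNeg_zero]
  | insert a s ha ih =>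
    rw [Finset.sum_insert ha, Finset.prod_insert ha,
      expNeg_add (hf a) (Finset.sum_nonneg fun i _ => hf i), ih]

lemma measurable_expNeg : Measurable expNeg := by
  unfold expNeg
  exact Measurable.ite (measurableSet_singleton _) measurable_const
    (Real.measurable_exp.comp measurable_ereal_toReal.neg)

/-! ### The interaction of a tuple with `y` -/

/-- The factor `e^{-φ(y, x_S)}`. -/
def pairFactor (φ : Potential 𝕏) (y : 𝕏) {k : ℕ} (x : Fin k → 𝕏) (S : Finset (Fin k)) : ℝ :=
  expNeg (φ (S.card + 1) (Fin.cons y (subtuple x S)))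

/-- `e^{-∑_{∅ ≠ S ⊆ [k]} φ(y, x_S)}`, the Boltzmann factor of the interaction between `y` and all
nonempty subtuples of `x`. -/
def fullFactor (φ : Potential 𝕏) (y : 𝕏) {k : ℕ} (x : Fin k → 𝕏) : ℝ :=
  ∏ S ∈ Finset.univ.powerset.erase (∅ : Finset (Fin k)), pairFactor φ y x S

lemma pairFactor_nonneg (φ : Potential 𝕏) (y : 𝕏) {k : ℕ} (x : Fin k → 𝕏)
    (S : Finset (Fin k)) : 0 ≤ pairFactor φ y x S := expNeg_nonneg _

lemma pairFactor_le_one {φ : Potential 𝕏} (hrep : Repulsive φ) (y : 𝕏) {k : ℕ}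
    (x : Fin k → 𝕏) (S : Finset (Fin k)) : pairFactor φ y x S ≤ 1 := expNeg_le_one (hrep _ _)

lemma fullFactor_nonneg (φ : Potential 𝕏) (y : 𝕏) {k : ℕ} (x : Fin k → 𝕏) :
    0 ≤ fullFactor φ y x := Finset.prod_nonneg fun S _ => pairFactor_nonneg φ y x S

lemma fullFactor_le_one {φ : Potential 𝕏} (hrep : Repulsive φ) (y : 𝕏) {k : ℕ}
    (x : Fin k → 𝕏) : fullFactor φ y x ≤ 1 :=
  Finset.prod_le_one (fun S _ => pairFactor_nonneg φ y x S)
    (fun S _ => pairFactor_le_one hrep y x S)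

/-- Any increasing enumeration of `S` may be used in place of the one in `subtuple`. -/
lemma pairFactor_eq (φ : Potential 𝕏) (y : 𝕏) {k m : ℕ} (x : Fin k → 𝕏) (S : Finset (Fin k))
    (h : S.card = m) (f : Fin m → Fin k) (hf : ∀ i, f i ∈ S) (hm : StrictMono f) :
    pairFactor φ y x S = expNeg (φ (m + 1) (Fin.cons y (x ∘ f))) := by
  subst h
  rw [Finset.orderEmbOfFin_unique rfl hf hm]
  rfl

lemma pairFactor_univ (φ : Potential 𝕏) (y : 𝕏) {k : ℕ} (x : Fin k → 𝕏) :
    pairFactor φ y x Finset.univ = expNeg (φ (k + 1) (Fin.cons y x)) :=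
  pairFactor_eq φ y x _ (by simp) id (by simp) strictMono_id

lemma pairFactor_tail (φ : Potential 𝕏) (y : 𝕏) {k : ℕ} (x : Fin (k + 1) → 𝕏)
    (S : Finset (Fin k)) :
    pairFactor φ y x (S.map (Fin.succEmb k)) = pairFactor φ y (fun i => x i.succ) S := by
  rw [pairFactor_eq φ y x (S.map (Fin.succEmb k)) (Finset.card_map _)
    (fun i => (S.orderEmbOfFin rfl i).succ)
    (fun i => Finset.mem_map_of_mem _ (Finset.orderEmbOfFin_mem S rfl i))
    (fun i j hij => Fin.succ_lt_succ_iff.2 ((S.orderEmbOfFin rfl).strictMono hij))]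
  rfl

/-- The product over proper nonempty subsets contains all the factors of the tail of `x`, and the
remaining ones are at most `1`. -/
lemma prod_proper_le {φ : Potential 𝕏} (hrep : Repulsive φ) (y : 𝕏) {k : ℕ}
    (x : Fin (k + 1) → 𝕏) :
    ∏ S ∈ (Finset.univ.powerset.erase (∅ : Finset (Fin (k + 1)))).erase Finset.univ,
      pairFactor φ y x S ≤ fullFactor φ y (fun i => x i.succ) := by
  have h : fullFactor φ y (fun i => x i.succ) =
      ∏ S ∈ (Finset.univ.powerset.erase (∅ : Finset (Fin k))).map
        (Finset.mapEmbedding (Fin.succEmb k)).toEmbedding, pairFactor φ y x S := by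
    rw [Finset.prod_map]
    exact Finset.prod_congr rfl fun S _ => (pairFactor_tail φ y x S).symm
  rw [h]
  refine Finset.prod_le_prod_of_subset_of_le_one ?_ (fun S _ => pairFactor_nonneg φ y x S)
    (fun S _ _ => pairFactor_le_one hrep y x S)
  intro T hT
  obtain ⟨S, hS, rfl⟩ := Finset.mem_map.1 hT
  simp only [Finset.powerset_univ, Finset.mem_erase, Finset.mem_univ, and_true] at hS ⊢
  refine ⟨fun h0 => ?_, by simpa using hS⟩
  have : (0 : Fin (k + 1)) ∈ S.map (Fin.succEmb k) := by
    have h1 := Finset.mem_univ (0 : Fin (k + 1))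
    rw [← h0] at h1
    exact h1
  obtain ⟨i, _, hi⟩ := Finset.mem_map.1 this
  exact Fin.succ_ne_zero i hi

lemma fullFactor_eq (φ : Potential 𝕏) (y : 𝕏) {k : ℕ} (x : Fin (k + 1) → 𝕏) :
    fullFactor φ y x = expNeg (φ (k + 2) (Fin.cons y x)) *
      ∏ S ∈ (Finset.univ.powerset.erase (∅ : Finset (Fin (k + 1)))).erase Finset.univ,
        pairFactor φ y x S := by
  rw [fullFactor, ← pairFactor_univ, Finset.mul_prod_erase]
  simp [Finset.univ_eq_empty_iff]

lemma measurable_fullFactor [MeasurableSpace 𝕏] {φ : Potential 𝕏} (hpot : IsPotential φ) (y : 𝕏)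
    (k : ℕ) : Measurable (fun x : Fin k → 𝕏 => fullFactor φ y x) := by
  unfold fullFactor pairFactor
  refine Finset.measurable_prod _ fun S _ => measurable_expNeg.comp ((hpot.2 _).comp ?_)
  refine measurable_pi_iff.2 fun i => ?_
  refine Fin.cases ?_ (fun j => ?_) i
  · simp
  · simpa [subtuple] using measurable_pi_apply _

/-! ### The partially pinned Hamiltonian -/

/-- Pinning at `y` adds at least the interaction with `y`. -/
lemma le_pin {φ : Potential 𝕏} (hsym : IsSymmetric φ) (hrep : Repulsive φ) (y : 𝕏) {m : ℕ}
    (w : Fin m → 𝕏) : φ (m + 1) (Fin.cons y w) ≤ pin φ (fun _ : Fin 1 => y) m w := by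
  have h1 : φ (m + 1) (Fin.cons y w) = φ (m + 1) (Fin.append w (fun _ : Fin 1 => y)) := by
    rw [Fin.append_right_eq_snoc, Fin.snoc_eq_cons_rotate]
    exact (hsym (m + 1) (finRotate _) _).symm
  rw [h1]
  exact Finset.single_le_sum (s := (Finset.univ : Finset (Fin 1)).powerset)
    (f := fun S => φ (m + S.card) (Fin.append w (subtuple (fun _ : Fin 1 => y) S)))
    (fun S _ => hrep _ _) (Finset.mem_powerset_self _)

lemma partialPin_nonneg [PseudoMetricSpace 𝕏] {φ : Potential 𝕏} (hrep : Repulsive φ)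
    (z₀ y : 𝕏) (t : ℝ≥0∞) (m : ℕ) (w : Fin m → 𝕏) : 0 ≤ partialPin z₀ φ y t m w := by
  unfold partialPin
  split_ifs
  · exact Finset.sum_nonneg fun S _ => hrep _ _
  · exact hrep _ _

lemma D_subtuple [PseudoMetricSpace 𝕏] (z₀ : 𝕏) {k : ℕ} (x : Fin k → 𝕏) (S : Finset (Fin k)) :
    D z₀ (subtuple x S) = ∑ i ∈ S, dist z₀ (x i) := by
  unfold D subtuple
  rw [← Finset.sum_coe_sort S]
  exact (S.orderIsoOfFin rfl).toEquiv.sum_comp (fun i : S => dist z₀ (x i))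

/-- When no point of `x` is at the base point, every proper subtuple precedes `x`, so that the
interaction of `y` with all proper nonempty subtuples enters the Hamiltonian. -/
lemma expNeg_hamiltonian_le [PseudoMetricSpace 𝕏] {φ : Potential 𝕏} (hsym : IsSymmetric φ)
    (hrep : Repulsive φ) (z₀ y : 𝕏) {k : ℕ} (x : Fin k → 𝕏) (hx : ∀ i, 0 < dist z₀ (x i)) :
    expNeg (hamiltonian (partialPin z₀ φ y (ENNReal.ofReal (D z₀ x))) x) ≤
      ∏ S ∈ (Finset.univ.powerset.erase (∅ : Finset (Fin k))).erase Finset.univ,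
        pairFactor φ y x S := by
  unfold pairFactor
  rw [← expNeg_sum _ _ fun S => hrep _ _]
  refine expNeg_anti (Finset.sum_nonneg fun S _ => hrep _ _) ?_
  unfold hamiltonian
  refine (Finset.sum_le_sum fun S hS => ?_).trans
    (Finset.sum_le_sum_of_subset_of_nonneg (Finset.erase_subset _ _)
      fun S _ _ => partialPin_nonneg hrep _ _ _ _ _)
  have hSu : S ≠ Finset.univ := (Finset.mem_erase.1 hS).1
  have hlt : D z₀ (subtuple x S) < D z₀ x := by
    rw [D_subtuple]
    obtain ⟨i, hi⟩ : ∃ i, i ∉ S := by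
      by_contra! h
      exact hSu (Finset.eq_univ_iff_forall.2 h)
    exact Finset.sum_lt_sum_of_subset (Finset.subset_univ S) (Finset.mem_univ i) hi (hx i)
      fun _ _ _ => dist_nonneg
  have h0 : 0 ≤ D z₀ (subtuple x S) := Finset.sum_nonneg fun _ _ => dist_nonneg
  rw [partialPin, if_pos ((ENNReal.ofReal_lt_ofReal_iff (h0.trans_lt hlt)).2 hlt)]
  exact le_pin hsym hrep y _

/-- The pointwise bound behind the telescoping. -/
lemma integrand_le [PseudoMetricSpace 𝕏] {φ : Potential 𝕏} (hsym : IsSymmetric φ)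
    (hrep : Repulsive φ) (z₀ y : 𝕏) {k : ℕ} (x : Fin (k + 1) → 𝕏)
    (hx : ∀ i, 0 < dist z₀ (x i)) :
    (1 - expNeg (φ (k + 2) (Fin.cons y x))) *
        expNeg (hamiltonian (partialPin z₀ φ y (ENNReal.ofReal (D z₀ x))) x) ≤
      fullFactor φ y (fun i => x i.succ) - fullFactor φ y x := by
  have h1 := expNeg_hamiltonian_le hsym hrep z₀ y x hx
  have h2 := prod_proper_le hrep y x
  have h3 := fullFactor_eq φ y x
  have h4 : expNeg (φ (k + 2) (Fin.cons y x)) ≤ 1 := expNeg_le_one (hrep _ _)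
  have h5 := mul_le_mul_of_nonneg_left h1 (sub_nonneg.2 h4)
  rw [h3]
  linarith

/-! ### Integration -/

lemma ae_dist_pos [MetricSpace 𝕏] [MeasurableSpace 𝕏] [BorelSpace 𝕏] {ν : Measure 𝕏}
    (hA : AssumptionA ν) (z₀ : 𝕏) : ∀ᵐ x ∂ν, 0 < dist z₀ x := by
  have h0 : ν.map (fun x => dist z₀ x) {0} = 0 := hA z₀ (by simp)
  rw [Measure.map_apply (by fun_prop) (measurableSet_singleton _)] at h0
  filter_upwards [compl_mem_ae_iff.2 h0] with x hx
  exact lt_of_le_of_ne dist_nonneg fun h => hx h.symm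

lemma integrable_fullFactor [MeasurableSpace 𝕏] {φ : Potential 𝕏} (hpot : IsPotential φ)
    (hrep : Repulsive φ) (y : 𝕏) (μ : Measure 𝕏) [IsFiniteMeasure μ] {j k : ℕ}
    (g : (Fin j → 𝕏) → (Fin k → 𝕏)) (hg : Measurable g) :
    Integrable (fun x => fullFactor φ y (g x)) (Measure.pi fun _ : Fin j => μ) :=
  Integrable.of_bound ((measurable_fullFactor hpot y k).comp hg).aestronglyMeasurable 1
    (Filter.Eventually.of_forall fun x => by
      rw [Real.norm_of_nonneg (fullFactor_nonneg φ y _)]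
      exact fullFactor_le_one hrep y _)

lemma integral_tail [MeasurableSpace 𝕏] (μ : Measure 𝕏) [IsFiniteMeasure μ] {k : ℕ}
    (f : (Fin k → 𝕏) → ℝ) :
    ∫ x, f (fun i => x i.succ) ∂(Measure.pi fun _ : Fin (k + 1) => μ) =
      μ.real Set.univ * ∫ x, f x ∂(Measure.pi fun _ : Fin k => μ) := by
  have h := (measurePreserving_piFinSuccAbove (fun _ : Fin (k + 1) => μ) 0).integral_comp'
    (fun p : 𝕏 × (Fin k → 𝕏) => f p.2)
  rw [integral_fun_snd] at h
  exact h

/-- The integral over `(k+1)`-tuples is bounded by `b F_k - F_{k+1}`, where `F_k` is the integral of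
`fullFactor` against the `k`-fold product of `ν` restricted to `Λ ∩ closedBall y R`, and `b` is
the mass of that restriction. -/
lemma integral_le [MetricSpace 𝕏] [MeasurableSpace 𝕏] [BorelSpace 𝕏]
    {ν : Measure 𝕏} [SigmaFinite ν] (hA : AssumptionA ν) (z₀ : 𝕏)
    {Λ : Set 𝕏} (hΛm : MeasurableSet Λ) {R : ℝ} {φ : Potential 𝕏}
    (hpot : IsPotential φ) (hsym : IsSymmetric φ) (hrep : Repulsive φ) (hrange : HasRange φ R)
    (y : 𝕏) [IsFiniteMeasure (ν.restrict (Λ ∩ Metric.closedBall y R))] (k : ℕ) :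
    ∫ x in tupleSet Λ (k + 1),
        (1 - expNeg (φ (k + 2) (Fin.cons y x))) *
          expNeg (hamiltonian (partialPin z₀ φ y (ENNReal.ofReal (D z₀ x))) x)
        ∂(piMeasure ν (k + 1)) ≤
      (ν.restrict (Λ ∩ Metric.closedBall y R)).real Set.univ *
        ∫ x, fullFactor φ y x ∂(Measure.pi fun _ : Fin k => ν.restrict (Λ ∩ Metric.closedBall y R))
      - ∫ x, fullFactor φ y x
        ∂(Measure.pi fun _ : Fin (k + 1) => ν.restrict (Λ ∩ Metric.closedBall y R)) := by
  have hsub : tupleSet (Λ ∩ Metric.closedBall y R) (k + 1) ⊆ tupleSet Λ (k + 1) :=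
    Set.pi_mono fun _ _ => Set.inter_subset_left
  -- By the range condition the integrand vanishes unless all the points are within `R` of `y`.
  rw [setIntegral_eq_of_subset_of_forall_sdiff_eq_zero
    (s := tupleSet (Λ ∩ Metric.closedBall y R) (k + 1)) (t := tupleSet Λ (k + 1))
    (MeasurableSet.univ_pi fun _ => hΛm) hsub]
  · rw [piMeasure, tupleSet, Measure.restrict_pi_pi, ← integral_tail, ← integral_sub]
    · refine integral_mono_of_nonneg (Filter.Eventually.of_forall fun x => ?_) ?_ ?_
      · exact mul_nonneg (sub_nonneg.2 (expNeg_le_one (hrep _ _))) (expNeg_nonneg _)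
      · exact (integrable_fullFactor hpot hrep y _ _ (by fun_prop)).sub
          (integrable_fullFactor hpot hrep y _ (fun x => x) (by fun_prop))
      · have hae : ∀ᵐ x ∂(Measure.pi fun _ : Fin (k + 1) =>
            ν.restrict (Λ ∩ Metric.closedBall y R)), ∀ i, 0 < dist z₀ (x i) :=
          Filter.eventually_all.2 fun i => (Measure.tendsto_eval_ae_ae
              (μ := fun _ : Fin (k + 1) => ν.restrict (Λ ∩ Metric.closedBall y R))
              (i := i)).eventually
            (ae_restrict_of_ae (ae_dist_pos hA z₀))
        filter_upwards [hae] with x hx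
        exact integrand_le hsym hrep z₀ y x hx
    · exact integrable_fullFactor hpot hrep y _ _ (by fun_prop)
    · exact integrable_fullFactor hpot hrep y _ (fun x => x) (by fun_prop)
  · rintro x ⟨hx1, hx2⟩
    obtain ⟨i, hi⟩ : ∃ i, x i ∉ Metric.closedBall y R := by
      by_contra! h
      exact hx2 fun i _ => ⟨hx1 i trivial, h i⟩
    rw [hrange (k + 2) (Fin.cons y x) ⟨i.succ, 0, by simpa using hi⟩, expNeg_zero]
    simp

/-- (Key estimate in Lemma `claim:boundedRange`.) Under Assumption (A), for a
symmetric repulsive potential `φ` of range at most `R`, every `y ∈ 𝕏` and every real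
`z ∈ [0, 1/B_R]`:
`∑_{k≥1} (z^k/k!) ∫_{Λ^k} (1 - e^{-φ(y,x)}) e^{-H(x|y_{≺x})} dν^k(x) ≤ 1`. -/
theorem statement14 {𝕏 : Type*} [MetricSpace 𝕏] [CompleteSpace 𝕏]
    [TopologicalSpace.SeparableSpace 𝕏] [MeasurableSpace 𝕏] [BorelSpace 𝕏]
    (ν : Measure 𝕏) [IsLocallyFiniteMeasure ν] [SigmaFinite ν]
    (hA : AssumptionA ν) (z₀ : 𝕏)
    (Λ : Set 𝕏) (hΛb : Bornology.IsBounded Λ) (hΛm : MeasurableSet Λ)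
    (R : ℝ) (hR : 0 ≤ R) (φ : Potential 𝕏)
    (hpot : IsPotential φ) (hsym : IsSymmetric φ) (hrep : Repulsive φ)
    (hrange : HasRange φ R) (y : 𝕏)
    (zr : ℝ) (hz : zr ∈ Set.Icc (0 : ℝ) ((ballVolSup ν R).toReal)⁻¹) :
    ∑' k : ℕ, (zr ^ (k + 1) / (Nat.factorial (k + 1) : ℝ)) *
        ∫ x in tupleSet Λ (k + 1),
          (1 - expNeg (φ (k + 2) (Fin.cons y x))) *
            expNeg (hamiltonian (partialPin z₀ φ y (ENNReal.ofReal (D z₀ x))) x)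
          ∂(piMeasure ν (k + 1)) ≤ 1 := by
  by_cases hB : (ballVolSup ν R).toReal = 0
  · -- Here `B_R` is `0` or `∞`, and the convention `0⁻¹ = 0` forces `zr = 0`.
    have hz0 : zr = 0 := by
      rw [hB, inv_zero] at hz
      exact le_antisymm hz.2 hz.1
    simp [hz0]
  have hBtop : ballVolSup ν R ≠ ⊤ := fun h => hB (by simp [h])
  have hmass : ν.restrict (Λ ∩ Metric.closedBall y R) Set.univ ≤ ballVolSup ν R := by
    rw [Measure.restrict_apply_univ]
    exact (measure_mono Set.inter_subset_right).trans
      (le_iSup (fun x : 𝕏 => ν (Metric.closedBall x R)) y)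
  have : IsFiniteMeasure (ν.restrict (Λ ∩ Metric.closedBall y R)) :=
    ⟨hmass.trans_lt hBtop.lt_top⟩
  set b : ℝ := (ν.restrict (Λ ∩ Metric.closedBall y R)).real Set.univ with hb
  have hbB : b ≤ (ballVolSup ν R).toReal := ENNReal.toReal_mono hBtop hmass
  have hb0 : 0 ≤ b := ENNReal.toReal_nonneg
  have hzb : zr * b ≤ 1 := by
    calc zr * b ≤ ((ballVolSup ν R).toReal)⁻¹ * (ballVolSup ν R).toReal :=
          mul_le_mul hz.2 hbB hb0 (inv_nonneg.2 ENNReal.toReal_nonneg)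
      _ = 1 := inv_mul_cancel₀ hB
  set F : ℕ → ℝ := fun k => ∫ x, fullFactor φ y x
    ∂(Measure.pi fun _ : Fin k => ν.restrict (Λ ∩ Metric.closedBall y R)) with hF
  have hF0 : ∀ k, 0 ≤ F k := fun k => integral_nonneg fun x => fullFactor_nonneg φ y x
  have hFz : F 0 = 1 := by
    have h1 : ∀ x : Fin 0 → 𝕏, fullFactor φ y x = 1 := fun x => by
      rw [fullFactor, show Finset.univ.powerset.erase (∅ : Finset (Fin 0)) = ∅ from by decide,
        Finset.prod_empty]
    simp [hF, h1, measureReal_def]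
  set a : ℕ → ℝ := fun k => zr ^ k / (Nat.factorial k : ℝ) * F k with ha
  have hc0 : ∀ k, 0 ≤ zr ^ k / (Nat.factorial k : ℝ) := fun k =>
    div_nonneg (pow_nonneg hz.1 _) (Nat.cast_nonneg _)
  have ha0 : ∀ k, 0 ≤ a k := fun k => mul_nonneg (hc0 k) (hF0 k)
  have hstep : ∀ k, zr ^ (k + 1) / (Nat.factorial (k + 1) : ℝ) * (b * F k - F (k + 1)) ≤
      a k - a (k + 1) := by
    intro k
    have h1 : zr ^ (k + 1) / (Nat.factorial (k + 1) : ℝ) * (b * F k) =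
        (zr * b) / ((k : ℝ) + 1) * a k := by
      simp only [ha, Nat.factorial_succ, Nat.cast_mul, Nat.cast_add, Nat.cast_one]
      have : (Nat.factorial k : ℝ) ≠ 0 := Nat.cast_ne_zero.2 (Nat.factorial_ne_zero k)
      have : (k : ℝ) + 1 ≠ 0 := by positivity
      field_simp
      ring
    have h2 : (zr * b) / ((k : ℝ) + 1) ≤ 1 := by
      rw [div_le_one (by positivity)]
      have : (0 : ℝ) ≤ k := Nat.cast_nonneg k
      linarith
    have h3 := mul_le_mul_of_nonneg_right h2 (ha0 k)
    rw [mul_sub, h1]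
    simp only [ha] at h3 ⊢
    linarith
  refine Real.tsum_le_of_sum_range_le (fun k => ?_) (fun n => ?_)
  · exact mul_nonneg (hc0 _) (integral_nonneg fun x =>
      mul_nonneg (sub_nonneg.2 (expNeg_le_one (hrep _ _))) (expNeg_nonneg _))
  · calc _ ≤ ∑ k ∈ Finset.range n, (a k - a (k + 1)) := Finset.sum_le_sum fun k _ =>
          (mul_le_mul_of_nonneg_left (integral_le hA z₀ hΛm hpot hsym hrep hrange y k)
            (hc0 _)).trans (hstep k)
      _ = a 0 - a n := Finset.sum_range_sub' a n
      _ ≤ 1 := by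
        have h0 : a 0 = 1 := by simp [ha, hFz]
        have := ha0 n
        linarith

end GibbsPP
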